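/- Let M be a CBM over (A,Σ) in which every event is the endpoint of some matching edge (no internal events), and let k ≥ 1. Define the relation ⇝_k on the events of M by: f ⇝_k e if and only if for some d ∈ DS and some i ≥ 1, e is the (i+k)-th write event on d and f is the i-th read event from d, where write events on d (events that are sources of ▷^d-edges) are counted in the process order on the events of Writer(d), and read events from d (targets of ▷^d-edges) in the process order on the events of Reader(d). Then M is ∃k-bounded if and only if the relation < ∪ ⇝_k is acyclic. -/

import Mathlib

/-! ### Architectures and concurrent behaviors with matching (CBMs) -/

/-- The three kinds of data structures. -/
inductive DSKind : Type
  | stack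
  | queue
  | bag
deriving DecidableEq

/-- An architecture: a finite set of processes, a finite set of data structures
(each a stack, queue, or bag), with writer and reader processes; stacks are
written and read by the same process. -/
structure Architecture where
  Procs : Type
  DS : Type
  procsFintype : Fintype Procs
  dsFintype : Fintype DS
  procsDecEq : DecidableEq Procs
  dsDecEq : DecidableEq DS
  kind : DS → DSKind
  Writer : DS → Procs
  Reader : DS → Procs
  stack_wr : ∀ d, kind d = DSKind.stack → Writer d = Reader d

attribute [instance] Architecture.procsFintype Architecture.dsFintype
  Architecture.procsDecEq Architecture.dsDecEq

/-- Potential events: a process together with a (1-based) position. -/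
abbrev Architecture.Event (A : Architecture) : Type := A.Procs × ℕ

/-- The data of a CBM: one word per process and one matching relation per
data structure (on potential events). -/
structure PreCBM (A : Architecture) (Alph : Type) where
  word : A.Procs → List Alph
  mrel : A.DS → A.Event → A.Event → Prop

namespace PreCBM

variable {A : Architecture} {Alph : Type}

/-- `(p,i)` is an event iff `1 ≤ i ≤ |w_p|`. -/
def isEvent (M : PreCBM A Alph) (e : A.Event) : Prop :=
  1 ≤ e.2 ∧ e.2 ≤ (M.word e.1).length

/-- The set of events of `M`. -/
def events (M : PreCBM A Alph) : Set A.Event := {e | M.isEvent e}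

/-- The label of event `(p,i)` is the `i`-th letter of `w_p`. -/
def label (M : PreCBM A Alph) (e : A.Event) : Option Alph :=
  (M.word e.1)[e.2 - 1]?

/-- Process-successor relation `(p,i) → (p,i+1)`. -/
def procSucc (M : PreCBM A Alph) (e f : A.Event) : Prop :=
  M.isEvent e ∧ M.isEvent f ∧ f.1 = e.1 ∧ f.2 = e.2 + 1

/-- `e ▷ f` for some data structure. -/
def mat (M : PreCBM A Alph) (e f : A.Event) : Prop := ∃ d, M.mrel d e f

def step (M : PreCBM A Alph) (e f : A.Event) : Prop := M.procSucc e f ∨ M.mat e f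

/-- The causal order `< = (→ ∪ ▷)⁺`. -/
def lt (M : PreCBM A Alph) : A.Event → A.Event → Prop := Relation.TransGen M.step

/-- An event is internal if it is not the endpoint of any matching edge. -/
def isInternal (M : PreCBM A Alph) (e : A.Event) : Prop :=
  ¬ ∃ d f, M.mrel d e f ∨ M.mrel d f e

/-- The CBM axioms. -/
structure IsCBM (M : PreCBM A Alph) : Prop where
  mrel_valid : ∀ d e f, M.mrel d e f →
    M.isEvent e ∧ M.isEvent f ∧ e.1 = A.Writer d ∧ f.1 = A.Reader d
  disjoint : ∀ d d' e f e' f', M.mrel d e f → M.mrel d' e' f' →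
    ¬ (d = d' ∧ e = e' ∧ f = f') → e ≠ e' ∧ e ≠ f' ∧ f ≠ e' ∧ f ≠ f'
  irrefl : ∀ e, ¬ M.lt e e
  lifo : ∀ d, A.kind d = DSKind.stack → ∀ e₁ f₁ e₂ f₂,
    M.mrel d e₁ f₁ → M.mrel d e₂ f₂ → M.lt e₁ e₂ → M.lt e₂ f₁ → M.lt f₂ f₁
  fifo : ∀ d, A.kind d = DSKind.queue → ∀ e₁ f₁ e₂ f₂,
    M.mrel d e₁ f₁ → M.mrel d e₂ f₂ → M.lt e₁ e₂ → M.lt f₁ f₂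

end PreCBM

/-- Concurrent behaviors with matching over `(A, Alph)`. -/
def CBM (A : Architecture) (Alph : Type) : Type := {M : PreCBM A Alph // M.IsCBM}
/-! ### Linearizations and existential boundedness -/

namespace PreCBM

variable {A : Architecture} {Alph : Type}

/-- A linearization of `M`, presented as a list enumerating all events of `M`
without repetition, in an order extending the causal order `<`. -/
def IsLinearization (M : PreCBM A Alph) (l : List A.Event) : Prop :=
  l.Nodup ∧ (∀ e, e ∈ l ↔ M.isEvent e) ∧ l.Pairwise (fun e f => ¬ M.lt f e)

/-- `M` is `∃k`-bounded: it admits a linearization such that at any time there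
are at most `k` unmatched writes in each data structure. -/
def ExistBounded (M : PreCBM A Alph) (k : ℕ) : Prop :=
  ∃ l : List A.Event, M.IsLinearization l ∧
    ∀ (n : ℕ) (d : A.DS),
      {ef : A.Event × A.Event |
        M.mrel d ef.1 ef.2 ∧ ef.1 ∈ l.take n ∧ ef.2 ∉ l.take n}.ncard ≤ k

end PreCBM

namespace PreCBM

variable {A : Architecture} {Alph : Type}

/-- `e` is a write event on `d` (source of a `▷^d`-edge). -/
def isWriteOn (M : PreCBM A Alph) (d : A.DS) (e : A.Event) : Prop :=
  ∃ f, M.mrel d e f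

/-- `f` is a read event from `d` (target of a `▷^d`-edge). -/
def isReadOn (M : PreCBM A Alph) (d : A.DS) (f : A.Event) : Prop :=
  ∃ e, M.mrel d e f

/-- `e` is the `n`-th write event on `d`, in the process order of the events of
`Writer(d)`. -/
def writeIndex (M : PreCBM A Alph) (d : A.DS) (e : A.Event) (n : ℕ) : Prop :=
  M.isWriteOn d e ∧ {j : ℕ | 1 ≤ j ∧ j ≤ e.2 ∧ M.isWriteOn d (e.1, j)}.ncard = n

/-- `f` is the `n`-th read event from `d`, in the process order of the events
of `Reader(d)`. -/
def readIndex (M : PreCBM A Alph) (d : A.DS) (f : A.Event) (n : ℕ) : Prop :=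
  M.isReadOn d f ∧ {j : ℕ | 1 ≤ j ∧ j ≤ f.2 ∧ M.isReadOn d (f.1, j)}.ncard = n

/-- The relation `⇝_k`: `f ⇝_k e` iff, for some data structure `d` and some
`i ≥ 1`, `e` is the `(i+k)`-th write on `d` and `f` is the `i`-th read from `d`. -/
def rev (M : PreCBM A Alph) (k : ℕ) (f e : A.Event) : Prop :=
  ∃ d i, 1 ≤ i ∧ M.writeIndex d e (i + k) ∧ M.readIndex d f i

end PreCBM

/-!
Cut a linearization at any point: the initial part `P` is down-closed for `<`, and the pending
edges of `d` at the cut number (writes on `d` in `P`) − (reads from `d` in `P`). As `P` contains an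
initial segment of the writes and of the reads, the `n`-th write lies in `P` iff `P` has at least
`n` writes, and likewise for reads. Hence every count of pending edges is at most `k` iff `P` is
down-closed for `⇝_k`. So the linearizations witnessing `∃k`-boundedness are exactly the
enumerations of the events compatible with `< ∪ ⇝_k`, and on a finite set such an enumeration
exists iff the relation is acyclic.
-/

section TopologicalSort

variable {α : Type*} {R : α → α → Prop} {s : Set α} {l : List α}

/-- `P` contains every `R`-predecessor of each of its elements. Unlike `IsLowerSet`, this makes
sense for a relation that is not given as an order instance. -/
def DownClosed (R : α → α → Prop) (P : Set α) : Prop :=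
  ∀ ⦃x y⦄, R x y → y ∈ P → x ∈ P

/-- `l` is a topological sort of `s` along `R`: it enumerates `s` without repetition and never lists
an element before one of its `R`-predecessors. `PreCBM.IsLinearization` unfolds to the case of the
causal order. -/
def IsTopologicalSort (R : α → α → Prop) (s : Set α) (l : List α) : Prop :=
  l.Nodup ∧ (∀ x, x ∈ l ↔ x ∈ s) ∧ l.Pairwise (fun x y => ¬ R y x)

theorem pairwise_not_swap_iff_downClosed_take (hl : l.Nodup) (hR : ∀ x y, R x y → x ∈ l) :
    l.Pairwise (fun x y => ¬ R y x) ↔ ∀ n, DownClosed R {x | x ∈ l.take n} := by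
  constructor
  · intro hpw n x y hxy hy
    have hx : x ∈ l.take n ++ l.drop n := by simpa using hR x y hxy
    rw [← List.take_append_drop n l, List.pairwise_append] at hpw
    exact (List.mem_append.1 hx).resolve_right fun hx => hpw.2.2 y hy x hx hxy
  · intro hclosed
    refine List.pairwise_iff_getElem.2 fun i j hi hj hij hji => ?_
    have hj_mem : l[j] ∈ l.take (i + 1) :=
      hclosed (i + 1) hji (List.mem_take_iff_getElem.2 ⟨i, by omega, rfl⟩)
    obtain ⟨i', hi', heq⟩ := List.mem_take_iff_getElem.1 hj_mem
    have : i' = j := (hl.getElem_inj_iff).1 heq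
    omega

theorem exists_isTopologicalSort (hs : s.Finite) (hacyclic : ∀ x, ¬ Relation.TransGen R x x) :
    ∃ l, IsTopologicalSort R s l := by
  classical
  have : IsStrictOrder α (Relation.TransGen R) := { irrefl := hacyclic }
  let := partialOrderOfSO (Relation.TransGen R)
  obtain ⟨r, hr, hle⟩ := extend_partialOrder ((· ≤ ·) : α → α → Prop)
  refine ⟨hs.toFinset.sort r, Finset.sort_nodup _ _, fun x => by simp, ?_⟩
  refine ((hs.toFinset.pairwise_sort r).and (hs.toFinset.sort_nodup r)).imp ?_
  rintro x y ⟨hxy, hne⟩ hyx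
  exact hne (antisymm_of r hxy (hle y x (Or.inr (.single hyx))))

theorem IsTopologicalSort.acyclic (hl : IsTopologicalSort R s l)
    (hR : ∀ x y, R x y → x ∈ s ∧ y ∈ s) (hirrefl : ∀ x, ¬ R x x) (x : α) :
    ¬ Relation.TransGen R x x := by
  classical
  obtain ⟨-, hmem, hpw⟩ := hl
  have idxOf_lt : ∀ x y, R x y → l.idxOf x < l.idxOf y := by
    intro x y hxy
    have hx : x ∈ l := (hmem x).2 (hR x y hxy).1
    have hy : y ∈ l := (hmem y).2 (hR x y hxy).2
    have hne : l.idxOf x ≠ l.idxOf y := fun h =>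
      hirrefl x (by simpa only [← (List.idxOf_inj hx).1 h] using hxy)
    refine hne.lt_or_gt.resolve_right fun hlt => ?_
    have := List.pairwise_iff_getElem.1 hpw _ _
      (List.idxOf_lt_length_of_mem hy) (List.idxOf_lt_length_of_mem hx) hlt
    simp only [List.getElem_idxOf] at this
    exact this hxy
  intro hcycle
  have := hcycle.lift l.idxOf idxOf_lt
  rw [Function.onFun, Relation.transGen_eq_self] at this
  exact lt_irrefl _ this

end TopologicalSort

section Rank

variable {ι α : Type*} [LinearOrder α] {pos : ι → α} {S T : Set ι} {a b : ι}

/-- The number of elements of `S` placed by `pos` no later than `a`, so that the earliest element of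
`S` has rank `1`. -/
noncomputable def rankIn (pos : ι → α) (S : Set ι) (a : ι) : ℕ :=
  {b ∈ S | pos b ≤ pos a}.ncard

theorem rankIn_lt_rankIn (hS : S.Finite) (hb : b ∈ S) (hab : pos a < pos b) :
    rankIn pos S a < rankIn pos S b :=
  Set.ncard_lt_ncard
    ⟨fun _ hc => ⟨hc.1, hc.2.trans hab.le⟩, fun h => hab.not_ge (h ⟨hb, le_rfl⟩).2⟩
    (hS.subset (Set.sep_subset _ _))

theorem mem_iff_rankIn_le_ncard (hS : S.Finite) (hTS : T ⊆ S)
    (hT : ∀ b ∈ T, ∀ a ∈ S, pos a ≤ pos b → a ∈ T) (ha : a ∈ S) :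
    a ∈ T ↔ rankIn pos S a ≤ T.ncard := by
  constructor
  · exact fun haT => Set.ncard_le_ncard (fun b hb => hT a haT b hb.1 hb.2) (hS.subset hTS)
  · contrapose!
    intro haT
    have hsub : T ⊆ {b ∈ S | pos b ≤ pos a} := fun b hb =>
      ⟨hTS hb, le_of_not_ge fun hab => haT (hT b hb a ha hab)⟩
    exact Set.ncard_lt_ncard ⟨hsub, fun h => haT (h ⟨ha, le_rfl⟩)⟩
      (hS.subset (Set.sep_subset _ _))

theorem exists_rankIn_eq (hS : S.Finite) (hpos : Set.InjOn pos S) {n : ℕ} (hn : 1 ≤ n)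
    (hnS : n ≤ S.ncard) : ∃ a ∈ S, rankIn pos S a = n := by
  have hmaps : ∀ a ∈ S, rankIn pos S a ∈ Set.Icc 1 S.ncard := fun a ha =>
    ⟨(Set.ncard_pos (hS.subset (Set.sep_subset _ _))).2 ⟨a, ha, le_rfl⟩,
      Set.ncard_le_ncard (Set.sep_subset _ _) hS⟩
  have hinj : ∀ a b, a ∈ S → b ∈ S → rankIn pos S a = rankIn pos S b → a = b := by
    intro a b ha hb hrank
    refine hpos ha hb (le_antisymm ?_ ?_) <;> refine le_of_not_gt fun hlt => ?_
    · exact (rankIn_lt_rankIn hS ha hlt).ne' hrank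
    · exact (rankIn_lt_rankIn hS hb hlt).ne hrank
  have hcard : (Set.Icc 1 S.ncard).ncard ≤ S.ncard := by simp [Set.ncard_eq_toFinset_card']
  obtain ⟨a, ha, h⟩ := Set.surj_on_of_inj_on_of_ncard_le (fun a _ => rankIn pos S a) hmaps
    hinj hcard (Set.finite_Icc _ _) n ⟨hn, hnS⟩
  exact ⟨a, ha, h.symm⟩

end Rank

namespace PreCBM

variable {A : Architecture} {Alph : Type} {M : PreCBM A Alph} {d : A.DS} {e f : A.Event}
  {P X : Set A.Event} {p : A.Procs} {k n : ℕ}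

theorem finite_events (M : PreCBM A Alph) : M.events.Finite :=
  (Set.finite_iUnion fun p => (Set.finite_Icc 1 (M.word p).length).image (Prod.mk p)).subset
    fun e he => Set.mem_iUnion.2 ⟨e.1, e.2, he, rfl⟩

theorem IsCBM.lt_mem_events (hM : M.IsCBM) (h : M.lt e f) : e ∈ M.events ∧ f ∈ M.events := by
  have step_mem : ∀ {e f}, M.step e f → e ∈ M.events ∧ f ∈ M.events := by
    rintro e f (h | ⟨d, h⟩)
    · exact ⟨h.1, h.2.1⟩
    · exact ⟨(hM.mrel_valid d e f h).1, (hM.mrel_valid d e f h).2.1⟩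
  induction h with
  | single h => exact step_mem h
  | tail _ h ih => exact ⟨ih.1, (step_mem h).2⟩

/-! ### Events of a single process -/

/-- The events of `M` on process `p`. -/
def processEvents (M : PreCBM A Alph) (p : A.Procs) : Set A.Event :=
  {e ∈ M.events | e.1 = p}

theorem finite_of_subset_processEvents (hX : X ⊆ M.processEvents p) : X.Finite :=
  M.finite_events.subset fun _ he => (hX he).1

theorem injOn_snd_processEvents : Set.InjOn Prod.snd (M.processEvents p) :=
  fun _ he _ hf h => Prod.ext (he.2.trans hf.2.symm) h

theorem lt_of_mem_processEvents (he : e ∈ M.processEvents p) (hf : f ∈ M.processEvents p)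
    (hef : e.2 < f.2) : M.lt e f := by
  obtain ⟨q, i⟩ := e
  obtain ⟨q', j⟩ := f
  obtain ⟨he, rfl : q = p⟩ := he
  obtain ⟨hf, rfl : q' = q⟩ := hf
  induction j, hef using Nat.le_induction with
  | base => exact .single (Or.inl ⟨he, hf, rfl, rfl⟩)
  | succ j hij ih =>
    have hj : M.isEvent (q', j) := ⟨he.1.trans (Nat.le_of_succ_le hij), Nat.le_of_succ_le hf.2⟩
    exact .tail (ih hj) (Or.inl ⟨hj, hf, rfl, rfl⟩)

theorem ncard_positions_eq_rankIn (hX : X ⊆ M.processEvents p) (he : e ∈ X) :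
    {j | 1 ≤ j ∧ j ≤ e.2 ∧ (e.1, j) ∈ X}.ncard = rankIn Prod.snd X e := by
  rw [rankIn, ← Set.ncard_image_of_injective _ (Prod.mk_right_injective e.1)]
  congr 1
  ext ⟨q, j⟩
  constructor
  · rintro ⟨j, ⟨-, hj, hjX⟩, heq⟩
    cases heq
    exact ⟨hjX, hj⟩
  · rintro ⟨hjX, hj⟩
    obtain rfl : e.1 = q := (hX he).2.trans (hX hjX).2.symm
    exact ⟨j, ⟨(hX hjX).1.1, hj, hjX⟩, rfl⟩

theorem mem_iff_rankIn_le_ncard_inter (hX : X ⊆ M.processEvents p) (hP : DownClosed M.lt P)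
    (he : e ∈ X) : e ∈ P ↔ rankIn Prod.snd X e ≤ (X ∩ P).ncard := by
  rw [← mem_iff_rankIn_le_ncard (finite_of_subset_processEvents hX) Set.inter_subset_left _ he,
    Set.mem_inter_iff, and_iff_right he]
  rintro f ⟨hfX, hfP⟩ g hgX hgf
  refine ⟨hgX, ?_⟩
  rcases hgf.eq_or_lt with heq | hlt
  · rwa [injOn_snd_processEvents (hX hgX) (hX hfX) heq]
  · exact hP (lt_of_mem_processEvents (hX hgX) (hX hfX) hlt) hfP

/-! ### Writes, reads and pending edges -/

/-- The matching relation `▷^d` as a set of pairs. -/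
def edges (M : PreCBM A Alph) (d : A.DS) : Set (A.Event × A.Event) :=
  {ef | M.mrel d ef.1 ef.2}

/-- The write events on `d`. -/
def writes (M : PreCBM A Alph) (d : A.DS) : Set A.Event := {e | M.isWriteOn d e}

/-- The read events from `d`. -/
def reads (M : PreCBM A Alph) (d : A.DS) : Set A.Event := {f | M.isReadOn d f}

/-- The edges of `▷^d` that are written but not yet read once the events in `P` have occurred. -/
def pending (M : PreCBM A Alph) (d : A.DS) (P : Set A.Event) : Set (A.Event × A.Event) :=
  {ef | M.mrel d ef.1 ef.2 ∧ ef.1 ∈ P ∧ ef.2 ∉ P}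

theorem image_fst_edges : Prod.fst '' M.edges d = M.writes d := by
  ext e
  simp [edges, writes, isWriteOn]

theorem image_snd_edges : Prod.snd '' M.edges d = M.reads d := by
  ext f
  simp [edges, reads, isReadOn]

namespace IsCBM

theorem writes_subset_processEvents (hM : M.IsCBM) (d : A.DS) :
    M.writes d ⊆ M.processEvents (A.Writer d) := by
  rintro e ⟨f, h⟩
  obtain ⟨he, -, hwriter, -⟩ := hM.mrel_valid d e f h
  exact ⟨he, hwriter⟩

theorem reads_subset_processEvents (hM : M.IsCBM) (d : A.DS) :
    M.reads d ⊆ M.processEvents (A.Reader d) := by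
  rintro f ⟨e, h⟩
  obtain ⟨-, hf, -, hreader⟩ := hM.mrel_valid d e f h
  exact ⟨hf, hreader⟩

theorem finite_edges (hM : M.IsCBM) (d : A.DS) : (M.edges d).Finite :=
  (M.finite_events.prod M.finite_events).subset fun ef h =>
    ⟨(hM.mrel_valid d ef.1 ef.2 h).1, (hM.mrel_valid d ef.1 ef.2 h).2.1⟩

theorem injOn_fst_edges (hM : M.IsCBM) (d : A.DS) : Set.InjOn Prod.fst (M.edges d) := by
  rintro ⟨e, f⟩ h ⟨e', f'⟩ h' heq
  by_contra hne
  exact (hM.disjoint d d e f e' f' h h' fun h => hne (Prod.ext h.2.1 h.2.2)).1 heq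

theorem injOn_snd_edges (hM : M.IsCBM) (d : A.DS) : Set.InjOn Prod.snd (M.edges d) := by
  rintro ⟨e, f⟩ h ⟨e', f'⟩ h' heq
  by_contra hne
  exact (hM.disjoint d d e f e' f' h h' fun h => hne (Prod.ext h.2.1 h.2.2)).2.2.2 heq

theorem disjoint_writes_reads (hM : M.IsCBM) (d : A.DS) : Disjoint (M.writes d) (M.reads d) := by
  rw [Set.disjoint_left]
  rintro e ⟨f, hef⟩ ⟨g, hge⟩
  refine (hM.disjoint d d e f g e hef hge ?_).2.1 rfl
  rintro ⟨-, -, rfl⟩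
  exact hM.irrefl f (.single (Or.inr ⟨d, hef⟩))

theorem ncard_writes_inter (hM : M.IsCBM) (d : A.DS) (P : Set A.Event) :
    (M.writes d ∩ P).ncard = (M.edges d ∩ Prod.fst ⁻¹' P).ncard := by
  rw [← image_fst_edges, ← Set.image_inter_preimage,
    ((hM.injOn_fst_edges d).mono Set.inter_subset_left).ncard_image]

theorem ncard_reads_inter (hM : M.IsCBM) (d : A.DS) (P : Set A.Event) :
    (M.reads d ∩ P).ncard = (M.edges d ∩ Prod.snd ⁻¹' P).ncard := by
  rw [← image_snd_edges, ← Set.image_inter_preimage,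
    ((hM.injOn_snd_edges d).mono Set.inter_subset_left).ncard_image]

theorem ncard_writes_eq_ncard_reads (hM : M.IsCBM) (d : A.DS) :
    (M.writes d).ncard = (M.reads d).ncard := by
  simpa using (hM.ncard_writes_inter d Set.univ).trans (hM.ncard_reads_inter d Set.univ).symm

theorem ncard_reads_add_ncard_pending (hM : M.IsCBM) (d : A.DS) (hP : DownClosed M.lt P) :
    (M.reads d ∩ P).ncard + (M.pending d P).ncard = (M.writes d ∩ P).ncard := by
  have hreads : M.edges d ∩ Prod.snd ⁻¹' P = M.edges d ∩ Prod.fst ⁻¹' P ∩ Prod.snd ⁻¹' P := by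
    rw [Set.inter_right_comm, eq_comm, Set.inter_eq_left]
    exact fun ef h => hP (.single (Or.inr ⟨d, h.1⟩)) h.2
  have hpending : M.pending d P = (M.edges d ∩ Prod.fst ⁻¹' P) \ Prod.snd ⁻¹' P := by
    ext ef
    simp [pending, edges, and_assoc]
  rw [hM.ncard_reads_inter, hM.ncard_writes_inter, hreads, hpending,
    Set.ncard_inter_add_ncard_sdiff_eq_ncard _ _ ((hM.finite_edges d).inter_of_left _)]

theorem writeIndex_iff (hM : M.IsCBM) :
    M.writeIndex d e n ↔ e ∈ M.writes d ∧ rankIn Prod.snd (M.writes d) e = n :=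
  and_congr_right fun he => by
    rw [← ncard_positions_eq_rankIn (hM.writes_subset_processEvents d) he]; rfl

theorem readIndex_iff (hM : M.IsCBM) :
    M.readIndex d f n ↔ f ∈ M.reads d ∧ rankIn Prod.snd (M.reads d) f = n :=
  and_congr_right fun hf => by
    rw [← ncard_positions_eq_rankIn (hM.reads_subset_processEvents d) hf]; rfl

theorem mem_iff_le_ncard_writes (hM : M.IsCBM) (hP : DownClosed M.lt P)
    (he : M.writeIndex d e n) : e ∈ P ↔ n ≤ (M.writes d ∩ P).ncard := by
  obtain ⟨hwrite, rfl⟩ := hM.writeIndex_iff.1 he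
  exact mem_iff_rankIn_le_ncard_inter (hM.writes_subset_processEvents d) hP hwrite

theorem mem_iff_le_ncard_reads (hM : M.IsCBM) (hP : DownClosed M.lt P)
    (hf : M.readIndex d f n) : f ∈ P ↔ n ≤ (M.reads d ∩ P).ncard := by
  obtain ⟨hread, rfl⟩ := hM.readIndex_iff.1 hf
  exact mem_iff_rankIn_le_ncard_inter (hM.reads_subset_processEvents d) hP hread

theorem exists_writeIndex (hM : M.IsCBM) (hn : 1 ≤ n) (hnd : n ≤ (M.writes d).ncard) :
    ∃ e, M.writeIndex d e n := by
  have hwrites := hM.writes_subset_processEvents d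
  obtain ⟨e, he⟩ := exists_rankIn_eq (finite_of_subset_processEvents hwrites)
    (injOn_snd_processEvents.mono hwrites) hn hnd
  exact ⟨e, hM.writeIndex_iff.2 he⟩

theorem exists_readIndex (hM : M.IsCBM) (hn : 1 ≤ n) (hnd : n ≤ (M.reads d).ncard) :
    ∃ f, M.readIndex d f n := by
  have hreads := hM.reads_subset_processEvents d
  obtain ⟨f, hf⟩ := exists_rankIn_eq (finite_of_subset_processEvents hreads)
    (injOn_snd_processEvents.mono hreads) hn hnd
  exact ⟨f, hM.readIndex_iff.2 hf⟩

/-! ### The relation `⇝_k` -/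

theorem rev_mem_events (hM : M.IsCBM) (h : M.rev k f e) : f ∈ M.events ∧ e ∈ M.events := by
  obtain ⟨d, i, -, ⟨he, -⟩, ⟨hf, -⟩⟩ := h
  exact ⟨(hM.reads_subset_processEvents d hf).1, (hM.writes_subset_processEvents d he).1⟩

theorem not_rev_self (hM : M.IsCBM) (e : A.Event) : ¬ M.rev k e e := by
  rintro ⟨d, i, -, ⟨hwrite, -⟩, ⟨hread, -⟩⟩
  exact Set.disjoint_left.1 (hM.disjoint_writes_reads d) hwrite hread

theorem downClosed_rev_of_ncard_pending_le (hM : M.IsCBM) (hP : DownClosed M.lt P)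
    (hbound : ∀ d, (M.pending d P).ncard ≤ k) : DownClosed (M.rev k) P := by
  rintro f e ⟨d, i, -, he, hf⟩ heP
  have hwrites : i + k ≤ (M.writes d ∩ P).ncard := (hM.mem_iff_le_ncard_writes hP he).1 heP
  have hcount := hM.ncard_reads_add_ncard_pending d hP
  have hpending := hbound d
  exact (hM.mem_iff_le_ncard_reads hP hf).2 (by omega)

-- If `P` has `i + k` writes, the last of them forces the `i`-th read into `P` through `⇝_k`.
theorem ncard_pending_le_of_downClosed_rev (hM : M.IsCBM) (hP : DownClosed M.lt P)
    (hrev : DownClosed (M.rev k) P) (d : A.DS) : (M.pending d P).ncard ≤ k := by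
  by_contra! hlt
  have hcount := hM.ncard_reads_add_ncard_pending d hP
  obtain ⟨i, hi⟩ : ∃ i, (M.writes d ∩ P).ncard = i + k :=
    ⟨(M.writes d ∩ P).ncard - k, by omega⟩
  have htotal : i + k ≤ (M.writes d).ncard := hi ▸ Set.ncard_le_ncard Set.inter_subset_left
    (finite_of_subset_processEvents (hM.writes_subset_processEvents d))
  obtain ⟨e, he⟩ := hM.exists_writeIndex (n := i + k) (by omega) htotal
  obtain ⟨f, hf⟩ := hM.exists_readIndex (d := d) (n := i) (by omega)
    (by rw [← hM.ncard_writes_eq_ncard_reads]; omega)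
  have heP : e ∈ P := (hM.mem_iff_le_ncard_writes hP he).2 hi.ge
  have hfP : f ∈ P := hrev ⟨d, i, by omega, he, hf⟩ heP
  have hreads : i ≤ (M.reads d ∩ P).ncard := (hM.mem_iff_le_ncard_reads hP hf).1 hfP
  omega

theorem downClosed_rev_iff (hM : M.IsCBM) (hP : DownClosed M.lt P) :
    DownClosed (M.rev k) P ↔ ∀ d, (M.pending d P).ncard ≤ k :=
  ⟨hM.ncard_pending_le_of_downClosed_rev hP, hM.downClosed_rev_of_ncard_pending_le hP⟩

theorem forall_ncard_pending_take_le_iff (hM : M.IsCBM) {l : List A.Event}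
    (hl : M.IsLinearization l) :
    (∀ n d, (M.pending d {e | e ∈ l.take n}).ncard ≤ k) ↔
      l.Pairwise (fun e f => ¬ M.rev k f e) := by
  obtain ⟨hnodup, hmem, hlt⟩ := hl
  rw [pairwise_not_swap_iff_downClosed_take hnodup
    fun e f h => (hmem e).2 (hM.lt_mem_events h).1] at hlt
  rw [pairwise_not_swap_iff_downClosed_take hnodup
    fun e f h => (hmem e).2 (hM.rev_mem_events h).1]
  exact forall_congr' fun n => (hM.downClosed_rev_iff (hlt n)).symm

theorem existBounded_iff_exists_isTopologicalSort (hM : M.IsCBM) (k : ℕ) :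
    M.ExistBounded k ↔
      ∃ l, IsTopologicalSort (fun e f => M.lt e f ∨ M.rev k e f) M.events l := by
  refine exists_congr fun l => ?_
  calc _ ↔ M.IsLinearization l ∧ l.Pairwise (fun e f => ¬ M.rev k f e) :=
        and_congr_right fun hl => hM.forall_ncard_pending_take_le_iff hl
    _ ↔ _ := by
        simp only [IsLinearization, IsTopologicalSort, not_or, List.pairwise_and_iff, and_assoc]
        rfl

end IsCBM

end PreCBM

theorem exist_bounded_iff_acyclic_general {A : Architecture} {Alph : Type} {M : PreCBM A Alph}
    (hM : M.IsCBM) (k : ℕ) :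
    M.ExistBounded k ↔ ∀ e, ¬ Relation.TransGen (fun u v => M.lt u v ∨ M.rev k u v) e e := by
  rw [hM.existBounded_iff_exists_isTopologicalSort]
  constructor
  · rintro ⟨l, hl⟩
    exact hl.acyclic (fun e f h => h.elim hM.lt_mem_events hM.rev_mem_events)
      (fun e h => h.elim (hM.irrefl e) (hM.not_rev_self e))
  · exact exists_isTopologicalSort M.finite_events

/-- Let `M` be a CBM in which every event is the endpoint of
some matching edge, and let `k ≥ 1`.  Then `M` is `∃k`-bounded iff the relation
`< ∪ ⇝_k` is acyclic. -/
theorem exist_bounded_iff_acyclic (A : Architecture) (Alph : Type)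
    [Fintype Alph] (M : CBM A Alph)
    (hNoInternal : ∀ e, M.1.isEvent e → ∃ d f, M.1.mrel d e f ∨ M.1.mrel d f e)
    (k : ℕ) (hk : 1 ≤ k) :
    (M.1.ExistBounded k ↔
      ∀ e, ¬ Relation.TransGen (fun u v => M.1.lt u v ∨ M.1.rev k u v) e e) := by
  exact exist_bounded_iff_acyclic_general M.2 k
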